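/- arXiv:1707.06177 — 3 statements merged into one kernel-verified Lean document; each statement's English description precedes it below -/
import Mathlib

section
/- Let a_1, …, a_7, b be real numbers with 0 ≤ a_1 ≤ a_2 ≤ … ≤ a_7 < 1 and b ≥ 0, and assume 1 + a_2 + a_3 ≤ a_4 + a_5 + a_6. If a_2 − a_1 ≥ 23/25, then F(a_1,…,a_7,b) + (1/8)·P·(a_4+a_5+a_6−1−a_2−a_3)^3 < 0. Moreover, under the same hypotheses on a_1, …, a_6, b (with 0 ≤ a_1 ≤ … ≤ a_6 < 1, b ≥ 0 and 1 + a_2 + a_3 ≤ a_4 + a_5 + a_6), if a_2 − a_1 ≥ 9/10 then the same expression evaluated with a_7 = 1 is negative. -/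
/-- The Donaldson–Futaki polynomial `F` for polarizations of `ℙ¹ × ℙ¹`-type on a
smooth del Pezzo surface of degree `1` (degree `2` upon substituting `a₇ = 1`). -/
noncomputable def Fpoly (a1 a2 a3 a4 a5 a6 a7 b : ℝ) : ℝ :=
  let P := 1 + 2 * b + a1 + a2 + a3 + a4 + a5 + a6 + a7
  let Q := 1 + 4 * b + 2 * (a1 + a2 + a3 + a4 + a5 + a6 + a7) -
    (a1 ^ 2 + a2 ^ 2 + a3 ^ 2 + a4 ^ 2 + a5 ^ 2 + a6 ^ 2 + a7 ^ 2)
  let T := 1 + 2 * b + 2 * a1 + a2 + a3 + a4 + a5 + a6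
  let S := a2 + a3 + a4 + a5 + a6
  (-(1 / 8) * T ^ 3 * P - (3 / 4) * (1 - a1) * T ^ 2 * P + (3 / 4) * T ^ 2 * Q +
    (3 / 2) * (1 - a1) * T * Q + (1 / 8) * P * (-1 + 2 * b + S) ^ 3 +
    (1 / 8) * P * (-1 + S) ^ 3)

/-- The coefficient of `b ^ 0`. -/
lemma coeff0_neg (s X y q D : ℝ) (hs : 0 ≤ s) (hX : 0 ≤ X) (hy : 0 ≤ y) (hD : 0 ≤ D)
    (hq : X ^ 2 / 5 + y ^ 2 ≤ q)
    (h : (6 * y ≤ X ∧ X + 4 * s + D ≤ 8 / 25) ∨ (y = 0 ∧ X + 4 * s + D ≤ 2 / 5)) :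
    -14 + 38 * X + 38 * y - 36 * q - 8 * s + 12 * s ^ 2 + 18 * s * X + 18 * s * y
      - 21 / 4 * X ^ 2 - 21 / 2 * X * y - 12 * s * q + 21 / 2 * X * q + 8 * s ^ 3
      - 6 * s ^ 2 * X - 6 * s ^ 2 * y - 3 / 2 * s * X ^ 2 - 3 * s * X * y - 7 / 8 * X ^ 3
      + 3 / 2 * s * X * q - 3 / 4 * X ^ 2 * q + 2 * s ^ 4 - 2 * s ^ 3 * X - 2 * s ^ 3 * y
      + 3 / 4 * s ^ 2 * X ^ 2 + 3 / 2 * s ^ 2 * X * y - 1 / 8 * s * X ^ 3 + 1 / 8 * X ^ 4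
      + 1 / 8 * X ^ 3 * y + D / 25 < 0 := by
  have hz : X + y ≤ 2 / 5 := by rcases h with h | h <;> linarith [h.1, h.2]
  have hX4 : X + 4 * s ≤ 2 / 5 := by rcases h with h | h <;> linarith [h.1, h.2]
  have hs1 : s ≤ 1 / 10 := by linarith
  have hX1 : X ≤ 2 / 5 := by linarith
  have hq0 : 0 ≤ q := by linarith [sq_nonneg X, sq_nonneg y]
  have hqc : (31 : ℝ) ≤ 36 + 12 * s - 21 / 2 * X - 3 / 2 * s * X + 3 / 4 * X ^ 2 := by
    nlinarith [mul_nonneg hs hX, mul_nonneg hs (sub_nonneg.2 hX1)]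
  have e1 : 31 * (X ^ 2 / 5 + y ^ 2)
      ≤ (36 + 12 * s - 21 / 2 * X - 3 / 2 * s * X + 3 / 4 * X ^ 2) * q := by
    nlinarith [mul_le_mul_of_nonneg_right hqc hq0]
  have e2 : 1 / 8 * X ^ 4 + 1 / 8 * X ^ 3 * y ≤ 7 / 8 * X ^ 3 := by
    nlinarith [mul_nonneg (pow_nonneg hX 3) (sub_nonneg.2 hz), pow_nonneg hX 3]
  have e3 : 3 / 4 * s ^ 2 * X ^ 2 + 3 / 2 * s ^ 2 * X * y ≤ 6 * s ^ 2 * X := by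
    nlinarith [mul_nonneg (mul_nonneg (sq_nonneg s) hX) (sub_nonneg.2 hz),
      mul_nonneg (sq_nonneg s) hX, mul_nonneg (mul_nonneg (sq_nonneg s) hX) hX]
  have e4 : 8 * s ^ 3 + 2 * s ^ 4 ≤ s ^ 2 := by
    nlinarith [mul_nonneg (sq_nonneg s) (sub_nonneg.2 hs1),
      mul_nonneg (pow_nonneg hs 3) (sub_nonneg.2 hs1), sq_nonneg s]
  have e5 : 13 * s ^ 2 ≤ 13 / 10 * s := by nlinarith [mul_nonneg hs (sub_nonneg.2 hs1)]
  have e6 : 18 * s * X + 18 * s * y ≤ 36 / 5 * s := by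
    nlinarith [mul_nonneg hs (sub_nonneg.2 hz)]
  have p1 : 0 ≤ s ^ 2 * y := by positivity
  have p2 : 0 ≤ s * X ^ 2 := by positivity
  have p3 : 0 ≤ s * X * y := by positivity
  have p4 : 0 ≤ s ^ 3 * X := by positivity
  have p5 : 0 ≤ s ^ 3 * y := by positivity
  have p6 : 0 ≤ s * X ^ 3 := by positivity
  have key : -14 + 38 * X + 38 * y - 31 * (X ^ 2 / 5 + y ^ 2) - 21 / 4 * X ^ 2
      - 21 / 2 * X * y + s + D / 25 < 0 := by
    rcases h with ⟨h1, h2⟩ | ⟨h1, h2⟩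
    · nlinarith [sq_nonneg (X - 8 / 25), mul_nonneg hX hy, sq_nonneg (y - 4 / 75)]
    · subst h1
      nlinarith [sq_nonneg (X - 2 / 5)]
  nlinarith [e1, e2, e3, e4, e5, e6, p1, p2, p3, p4, p5, p6, key]

/-- The coefficient of `b ^ 1`. -/
lemma coeff1_nonpos (s X y q D : ℝ) (hs : 0 ≤ s) (hX : 0 ≤ X) (hy : 0 ≤ y) (hD : 0 ≤ D)
    (hq : 0 ≤ q) (hz : X + y ≤ 2 / 5) (hX4 : X + 4 * s + D ≤ 2 / 5) :
    -16 + 33 * X + 33 * y - 21 * q + 12 * s ^ 2 + 6 * s * X + 6 * s * y - 3 * X ^ 2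
      - 6 * X * y - 3 * s * q + 3 * X * q + 4 * s ^ 3 - 3 * s ^ 2 * X - 3 * s ^ 2 * y
      - 1 / 4 * X ^ 3 + D ≤ 0 := by
  have hs1 : s ≤ 1 / 10 := by linarith
  have hX1 : X ≤ 2 / 5 := by linarith
  have e1 : 3 * X * q ≤ 21 * q := by nlinarith [mul_nonneg hq (sub_nonneg.2 hX1)]
  have e2 : s ^ 2 ≤ 1 / 100 := by nlinarith
  have e3 : s ^ 3 ≤ 1 / 100 := by nlinarith [mul_nonneg (sq_nonneg s) (sub_nonneg.2 hs1)]
  have e4 : s * (X + y) ≤ 4 / 100 := by nlinarith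
  have p1 : 0 ≤ s ^ 2 * y := by positivity
  have p2 : 0 ≤ s ^ 2 * X := by positivity
  have p3 : 0 ≤ X * y := by positivity
  have p4 : 0 ≤ s * q := by positivity
  have p5 : 0 ≤ X ^ 3 := by positivity
  have p6 : 0 ≤ X ^ 2 := by positivity
  linarith

/-- The whole expression in the deviations from the vertex. -/
lemma main_bound (s X y q D b : ℝ) (hs : 0 ≤ s) (hX : 0 ≤ X) (hy : 0 ≤ y) (hD : 0 ≤ D)
    (hb : 0 ≤ b) (hDs : D ≤ 1 / 5) (hq : X ^ 2 / 5 + y ^ 2 ≤ q)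
    (h : (6 * y ≤ X ∧ X + 4 * s + D ≤ 8 / 25) ∨ (y = 0 ∧ X + 4 * s + D ≤ 2 / 5)) :
    -(1 / 8) * (6 + 2 * b + 2 * s - X) ^ 3 * (7 + 2 * b + s - X - y)
      - (3 / 4) * (1 - s) * (6 + 2 * b + 2 * s - X) ^ 2 * (7 + 2 * b + s - X - y)
      + (3 / 4) * (6 + 2 * b + 2 * s - X) ^ 2 * (7 + 4 * b + 2 * s - s ^ 2 - q)
      + (3 / 2) * (1 - s) * (6 + 2 * b + 2 * s - X) * (7 + 4 * b + 2 * s - s ^ 2 - q)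
      + (1 / 8) * (7 + 2 * b + s - X - y) * (4 + 2 * b - X) ^ 3
      + (1 / 8) * (7 + 2 * b + s - X - y) * (4 - X) ^ 3
      + (1 / 8) * (7 + 2 * b + s - X - y) * D ^ 3 < 0 := by
  have hz : X + y ≤ 2 / 5 := by rcases h with h | h <;> linarith [h.1, h.2]
  have hX4 : X + 4 * s + D ≤ 2 / 5 := by rcases h with h | h <;> linarith [h.1, h.2]
  have hq0 : 0 ≤ q := by linarith [sq_nonneg X, sq_nonneg y]
  have c0 := coeff0_neg s X y q D hs hX hy hD hq h
  have c1 := mul_nonneg hb (neg_nonneg.2 (coeff1_nonpos s X y q D hs hX hy hD hq0 hz hX4))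
  have c2 : 0 ≤ b ^ 2 * (3 - 6 * X - 6 * y + 3 * q - 3 * s ^ 2) := by
    refine mul_nonneg (sq_nonneg b) ?_
    nlinarith
  have d1 : D ^ 3 ≤ D / 25 := by
    nlinarith [mul_nonneg hD (mul_nonneg (sub_nonneg.2 hDs) (by linarith : 0 ≤ 1 / 5 + D))]
  have d2 : (1 / 8) * (7 + 2 * b + s - X - y) * D ^ 3 ≤ (1 + b) * (D / 25) :=
    mul_le_mul (by linarith) d1 (by positivity) (by linarith)
  have d3 : 0 ≤ b * D := by positivity
  nlinarith [c0, c1, c2, d2, d3]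

theorem Fpoly_corr1_negative :
    (∀ a1 a2 a3 a4 a5 a6 a7 b : ℝ,
      0 ≤ a1 → a1 ≤ a2 → a2 ≤ a3 → a3 ≤ a4 → a4 ≤ a5 → a5 ≤ a6 → a6 ≤ a7 → a7 < 1 →
      0 ≤ b → 1 + a2 + a3 ≤ a4 + a5 + a6 → a2 - a1 ≥ 23 / 25 →
      Fpoly a1 a2 a3 a4 a5 a6 a7 b +
        (1 / 8) * (1 + 2 * b + a1 + a2 + a3 + a4 + a5 + a6 + a7) *
          (a4 + a5 + a6 - 1 - a2 - a3) ^ 3 < 0) ∧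
    (∀ a1 a2 a3 a4 a5 a6 b : ℝ,
      0 ≤ a1 → a1 ≤ a2 → a2 ≤ a3 → a3 ≤ a4 → a4 ≤ a5 → a5 ≤ a6 → a6 < 1 →
      0 ≤ b → 1 + a2 + a3 ≤ a4 + a5 + a6 → a2 - a1 ≥ 9 / 10 →
      Fpoly a1 a2 a3 a4 a5 a6 1 b +
        (1 / 8) * (1 + 2 * b + a1 + a2 + a3 + a4 + a5 + a6 + 1) *
          (a4 + a5 + a6 - 1 - a2 - a3) ^ 3 < 0) := by
  constructor
  · intro a1 a2 a3 a4 a5 a6 a7 b h0 h1 h2 h3 h4 h5 h6 h7 hb hc hd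
    have key := main_bound a1 ((1 - a2) + (1 - a3) + (1 - a4) + (1 - a5) + (1 - a6)) (1 - a7)
      ((1 - a2) ^ 2 + (1 - a3) ^ 2 + (1 - a4) ^ 2 + (1 - a5) ^ 2 + (1 - a6) ^ 2 + (1 - a7) ^ 2)
      (a4 + a5 + a6 - 1 - a2 - a3) b h0 (by linarith) (by linarith) (by linarith) hb (by linarith)
      (by nlinarith [sq_nonneg (a2 - a3), sq_nonneg (a2 - a4), sq_nonneg (a2 - a5),
        sq_nonneg (a2 - a6), sq_nonneg (a3 - a4), sq_nonneg (a3 - a5), sq_nonneg (a3 - a6),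
        sq_nonneg (a4 - a5), sq_nonneg (a4 - a6), sq_nonneg (a5 - a6)])
      (Or.inl ⟨by linarith, by linarith⟩)
    refine lt_of_eq_of_lt ?_ key
    simp only [Fpoly]
    ring
  · intro a1 a2 a3 a4 a5 a6 b h0 h1 h2 h3 h4 h5 h6 hb hc hd
    have key := main_bound a1 ((1 - a2) + (1 - a3) + (1 - a4) + (1 - a5) + (1 - a6)) 0
      ((1 - a2) ^ 2 + (1 - a3) ^ 2 + (1 - a4) ^ 2 + (1 - a5) ^ 2 + (1 - a6) ^ 2)
      (a4 + a5 + a6 - 1 - a2 - a3) b h0 (by linarith) (by linarith) (by linarith) hb (by linarith)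
      (by nlinarith [sq_nonneg (a2 - a3), sq_nonneg (a2 - a4), sq_nonneg (a2 - a5),
        sq_nonneg (a2 - a6), sq_nonneg (a3 - a4), sq_nonneg (a3 - a5), sq_nonneg (a3 - a6),
        sq_nonneg (a4 - a5), sq_nonneg (a4 - a6), sq_nonneg (a5 - a6)])
      (Or.inr ⟨rfl, by linarith⟩)
    refine lt_of_eq_of_lt ?_ key
    simp only [Fpoly]
    ring
end

section
/- Let a_1, …, a_7, b be real numbers with 0 ≤ a_1 ≤ a_2 ≤ … ≤ a_7 < 1 and b ≥ 0, and assume a_3 + a_4 + a_6 ≥ 1 + a_2 + a_5. If a_2 − a_1 ≥ 23/25, then F(a_1,…,a_7,b) + (1/8)·P·( (a_4+a_5+a_6−1−a_2−a_3)^3 + (a_3+a_5+a_6−1−a_2−a_4)^3 + (a_3+a_4+a_6−1−a_2−a_5)^3 ) < 0. Moreover, under the same hypotheses on a_1, …, a_6, b (with 0 ≤ a_1 ≤ … ≤ a_6 < 1, b ≥ 0 and a_3 + a_4 + a_6 ≥ 1 + a_2 + a_5), if a_2 − a_1 ≥ 9/10 then the same expression evaluated with a_7 = 1 is negative. -/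
/-- Homogenization (by `H`) of the quantity in the theorem. -/
noncomputable def Ghom (H a1 a2 a3 a4 a5 a6 a7 b : ℝ) : ℝ :=
  let P := H + 2 * b + a1 + a2 + a3 + a4 + a5 + a6 + a7
  let Q := H ^ 2 + 4 * b * H + 2 * (a1 + a2 + a3 + a4 + a5 + a6 + a7) * H -
    (a1 ^ 2 + a2 ^ 2 + a3 ^ 2 + a4 ^ 2 + a5 ^ 2 + a6 ^ 2 + a7 ^ 2)
  let T := H + 2 * b + 2 * a1 + a2 + a3 + a4 + a5 + a6
  let S := a2 + a3 + a4 + a5 + a6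
  (-(1 / 8) * T ^ 3 * P - (3 / 4) * (H - a1) * T ^ 2 * P + (3 / 4) * T ^ 2 * Q +
      (3 / 2) * (H - a1) * T * Q + (1 / 8) * P * (-H + 2 * b + S) ^ 3 +
      (1 / 8) * P * (-H + S) ^ 3 +
      (1 / 8) * P * ((a4 + a5 + a6 - H - a2 - a3) ^ 3 + (a3 + a5 + a6 - H - a2 - a4) ^ 3 +
        (a3 + a4 + a6 - H - a2 - a5) ^ 3))

set_option maxHeartbeats 0 in
set_option maxRecDepth 100000 in
lemma hom1 (b x s y d6 d5 d4 d3 w H a2 a3 a4 a5 a6 a7 : ℝ) (hb : 0 ≤ b) (hx : 0 ≤ x) (hs : 0 ≤ s)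
    (hy : 0 ≤ y) (hd6 : 0 ≤ d6) (hd5 : 0 ≤ d5) (hd4 : 0 ≤ d4) (hd3 : 0 ≤ d3) (hw : 0 ≤ w)
    (hH : H = (25 / 2) * (x + s + (2 * y + 2 * d6 + d5 + 2 * d4 + d3 + w)))
    (ha2 : a2 = H - (2 * y + 2 * d6 + d5 + 2 * d4 + d3 + w))
    (ha3 : a3 = H - (y + d6 + d5 + d4 + d3))
    (ha4 : a4 = H - (y + d6 + d5 + d4))
    (ha5 : a5 = H - (y + d6 + d5))
    (ha6 : a6 = H - (y + d6))
    (ha7 : a7 = H - y) :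
    0 ≤ -(Ghom H x a2 a3 a4 a5 a6 a7 b + (1 / 2) * H ^ 4) := by
  subst ha2 ha3 ha4 ha5 ha6 ha7
  subst hH
  simp only [Ghom]
  ring_nf
  positivity

set_option maxHeartbeats 0 in
set_option maxRecDepth 100000 in
lemma hom2 (b x s d6 d5 d4 d3 w H a2 a3 a4 a5 a6 : ℝ) (hb : 0 ≤ b) (hx : 0 ≤ x) (hs : 0 ≤ s)
    (hd6 : 0 ≤ d6) (hd5 : 0 ≤ d5) (hd4 : 0 ≤ d4) (hd3 : 0 ≤ d3) (hw : 0 ≤ w)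
    (hH : H = 10 * (x + s + (2 * d6 + d5 + 2 * d4 + d3 + w)))
    (ha2 : a2 = H - (2 * d6 + d5 + 2 * d4 + d3 + w))
    (ha3 : a3 = H - (d6 + d5 + d4 + d3))
    (ha4 : a4 = H - (d6 + d5 + d4))
    (ha5 : a5 = H - (d6 + d5))
    (ha6 : a6 = H - (d6)) :
    0 ≤ -(Ghom H x a2 a3 a4 a5 a6 H b + (1 / 2) * H ^ 4) := by
  subst ha2 ha3 ha4 ha5 ha6
  subst hH
  simp only [Ghom]
  ring_nf
  positivity

theorem Fpoly_corr3_negative :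
    (∀ a1 a2 a3 a4 a5 a6 a7 b : ℝ,
      0 ≤ a1 → a1 ≤ a2 → a2 ≤ a3 → a3 ≤ a4 → a4 ≤ a5 → a5 ≤ a6 → a6 ≤ a7 → a7 < 1 →
      0 ≤ b → a3 + a4 + a6 ≥ 1 + a2 + a5 → a2 - a1 ≥ 23 / 25 →
      Fpoly a1 a2 a3 a4 a5 a6 a7 b +
        (1 / 8) * (1 + 2 * b + a1 + a2 + a3 + a4 + a5 + a6 + a7) *
          ((a4 + a5 + a6 - 1 - a2 - a3) ^ 3 +
            (a3 + a5 + a6 - 1 - a2 - a4) ^ 3 +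
            (a3 + a4 + a6 - 1 - a2 - a5) ^ 3) < 0) ∧
    (∀ a1 a2 a3 a4 a5 a6 b : ℝ,
      0 ≤ a1 → a1 ≤ a2 → a2 ≤ a3 → a3 ≤ a4 → a4 ≤ a5 → a5 ≤ a6 → a6 < 1 →
      0 ≤ b → a3 + a4 + a6 ≥ 1 + a2 + a5 → a2 - a1 ≥ 9 / 10 →
      Fpoly a1 a2 a3 a4 a5 a6 1 b +
        (1 / 8) * (1 + 2 * b + a1 + a2 + a3 + a4 + a5 + a6 + 1) *
          ((a4 + a5 + a6 - 1 - a2 - a3) ^ 3 +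
            (a3 + a5 + a6 - 1 - a2 - a4) ^ 3 +
            (a3 + a4 + a6 - 1 - a2 - a5) ^ 3) < 0) := by
  constructor
  · intro a1 a2 a3 a4 a5 a6 a7 b h1 h2 h3 h4 h5 h6 h7 h8 hb hc hd
    have key := hom1 b a1 (a2 - a1 - 23 / 25) (1 - a7) (a7 - a6) (a6 - a5) (a5 - a4) (a4 - a3)
      (a3 + a4 + a6 - 1 - a2 - a5) 1 a2 a3 a4 a5 a6 a7 hb h1 (by linarith) (by linarith) (by linarith) (by linarith)
      (by linarith) (by linarith) (by linarith)
      (by ring) (by ring) (by ring) (by ring) (by ring) (by ring) (by ring)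
    simp only [Ghom] at key
    simp only [Fpoly]
    simp only [one_pow, mul_one] at key
    linarith
  · intro a1 a2 a3 a4 a5 a6 b h1 h2 h3 h4 h5 h6 h7 hb hc hd
    have key := hom2 b a1 (a2 - a1 - 9 / 10) (1 - a6) (a6 - a5) (a5 - a4) (a4 - a3)
      (a3 + a4 + a6 - 1 - a2 - a5) 1 a2 a3 a4 a5 a6 hb h1 (by linarith) (by linarith) (by linarith) (by linarith)
      (by linarith) (by linarith)
      (by ring) (by ring) (by ring) (by ring) (by ring) (by ring)
    simp only [Ghom] at key
    simp only [Fpoly]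
    simp only [one_pow, mul_one] at key
    linarith
end

section
/- Let a_1, …, a_7, b be real numbers with 0 ≤ a_1 ≤ a_2 ≤ … ≤ a_7 < 1 and b ≥ 0, and assume a_2 + a_5 + a_6 ≥ 1 + a_3 + a_4. If a_2 − a_1 ≥ 23/25, then F(a_1,…,a_7,b) + (1/8)·P·( (a_4+a_5+a_6−1−a_2−a_3)^3 + (a_3+a_5+a_6−1−a_2−a_4)^3 + (a_3+a_4+a_6−1−a_2−a_5)^3 + (a_2+a_5+a_6−1−a_3−a_4)^3 ) < 0. Moreover, under the same hypotheses on a_1, …, a_6, b (with 0 ≤ a_1 ≤ … ≤ a_6 < 1, b ≥ 0 and a_2 + a_5 + a_6 ≥ 1 + a_3 + a_4), if a_2 − a_1 ≥ 9/10 then the same expression evaluated with a_7 = 1 is negative. -/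
theorem coef_one_0 (u g y : ℝ) (hu : 0 ≤ u) (hg : 0 ≤ g) (hR : u + g ≤ 2/25) (hy : 0 ≤ y) (hyR : y ≤ 1/25) :
    (-218687/15625) + (593741/15625) * y + (-36) * y ^ 2 + (2374964/15625) * g + (-42) * g * y +
      42 * g * y ^ 2 + (-996/5) * g ^ 2 + (-12) * g ^ 2 * y ^ 2 + (392/5) * g ^ 3 +
      8 * g ^ 3 * y + (-32/5) * g ^ 4 + (-124991/15625) * u + 18 * u * y + (-12) * u * y ^ 2 +
      72 * u * g + (-12) * u * g * y + 6 * u * g * y ^ 2 + (-312/5) * u * g ^ 2 +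
      (56/5) * u * g ^ 3 + 12 * u ^ 2 + (-6) * u ^ 2 * y + (-24) * u ^ 2 * g +
      6 * u ^ 2 * g * y + 12 * u ^ 2 * g ^ 2 + 8 * u ^ 3 + (-2) * u ^ 3 * y + (-8) * u ^ 3 * g +
      2 * u ^ 4 < 0 := by
  have hw : 0 ≤ 2/25 - u - g := by linarith
  have hz : 0 ≤ 1/25 - y := by linarith
  nlinarith [sq_nonneg (g - 2/25),
    mul_nonneg hu hg,
    mul_nonneg hu hw,
    mul_nonneg hg hw,
    mul_nonneg (mul_nonneg hu hg) hg,
    mul_nonneg (mul_nonneg hg hg) hw,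
    mul_nonneg (mul_nonneg hu hu) hw,
    mul_nonneg (mul_nonneg hu hg) hw,
    mul_nonneg (mul_nonneg hu hu) hg,
    mul_nonneg (mul_nonneg (mul_nonneg hu hu) hu) hw,
    mul_nonneg (mul_nonneg (mul_nonneg hu hu) hg) hw,
    mul_nonneg (mul_nonneg (mul_nonneg hu hg) hg) hw,
    pow_nonneg hg 4,
    mul_nonneg (pow_nonneg hu 3) hg,
    mul_nonneg (pow_nonneg hg 3) hu,
    mul_nonneg (pow_nonneg hg 2) (pow_nonneg hu 2),
    mul_nonneg hu hy,
    mul_nonneg hg hy,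
    mul_nonneg hu hz,
    mul_nonneg hg hz,
    mul_nonneg hg (mul_nonneg hy hz),
    mul_nonneg hg (mul_nonneg hy hy),
    mul_nonneg hu (mul_nonneg hy hy),
    mul_nonneg hu (mul_nonneg hu hy),
    sq_nonneg y,
    mul_nonneg (mul_nonneg hu hg) hy,
    mul_nonneg (mul_nonneg hu hg) (mul_nonneg hy hz),
    mul_nonneg (mul_nonneg hu hg) (mul_nonneg hy hy),
    mul_nonneg (mul_nonneg hg hg) (mul_nonneg hy hy),
    mul_nonneg (pow_nonneg hu 3) hy,
    mul_nonneg (pow_nonneg hg 3) hz,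
    mul_nonneg (mul_nonneg (mul_nonneg hu hu) hg) hy,
    mul_nonneg (mul_nonneg (mul_nonneg hu hu) hg) hz,
    mul_nonneg (mul_nonneg hu hg) hz,
    mul_nonneg (mul_nonneg hu hg) (mul_nonneg hz hz)]

theorem coef_one_1 (u g y : ℝ) (hu : 0 ≤ u) (hg : 0 ≤ g) (hR : u + g ≤ 2/25) (hy : 0 ≤ y) (hyR : y ≤ 1/25) :
    (-249982/15625) + 33 * y + (-21) * y ^ 2 + 132 * g + (-24) * g * y + 12 * g * y ^ 2 +
      (-576/5) * g ^ 2 + (112/5) * g ^ 3 + 6 * u * y + (-3) * u * y ^ 2 + 24 * u * g +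
      (-48/5) * u * g ^ 2 + 12 * u ^ 2 + (-3) * u ^ 2 * y + (-12) * u ^ 2 * g + 4 * u ^ 3 < 0 := by
  have hw : 0 ≤ 2/25 - u - g := by linarith
  have hz : 0 ≤ 1/25 - y := by linarith
  nlinarith [sq_nonneg (g - 2/25),
    mul_nonneg hu hg,
    mul_nonneg hu hw,
    mul_nonneg hg hw,
    mul_nonneg (mul_nonneg hu hg) hg,
    mul_nonneg (mul_nonneg hg hg) hw,
    mul_nonneg (mul_nonneg hu hu) hw,
    mul_nonneg (mul_nonneg hu hg) hw,
    mul_nonneg (mul_nonneg hu hu) hg,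
    mul_nonneg hu hy,
    mul_nonneg hg hy,
    mul_nonneg hu hz,
    mul_nonneg hg hz,
    mul_nonneg hg (mul_nonneg hy hz),
    mul_nonneg hg (mul_nonneg hy hy),
    mul_nonneg hu (mul_nonneg hy hy),
    mul_nonneg hu (mul_nonneg hu hy),
    sq_nonneg y]

theorem coef_one_2 (u g y : ℝ) (hu : 0 ≤ u) (hg : 0 ≤ g) (hR : u + g ≤ 2/25) (hy : 0 ≤ y) (hyR : y ≤ 1/25) :
    (-3) + 6 * y + (-3) * y ^ 2 + 24 * g + (-48/5) * g ^ 2 + 3 * u ^ 2 < 0 := by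
  have hw : 0 ≤ 2/25 - u - g := by linarith
  have hz : 0 ≤ 1/25 - y := by linarith
  nlinarith [sq_nonneg (g - 2/25),
    mul_nonneg hu hg,
    mul_nonneg hu hw,
    mul_nonneg hg hw,
    mul_nonneg (mul_nonneg hu hg) hg,
    mul_nonneg (mul_nonneg hg hg) hw,
    mul_nonneg (mul_nonneg hu hu) hw,
    mul_nonneg (mul_nonneg hu hg) hw,
    mul_nonneg (mul_nonneg hu hu) hg,
    mul_nonneg hu hy,
    mul_nonneg hg hy,
    mul_nonneg hu hz,
    mul_nonneg hg hz,
    mul_nonneg hg (mul_nonneg hy hz),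
    mul_nonneg hg (mul_nonneg hy hy),
    mul_nonneg hu (mul_nonneg hy hy),
    mul_nonneg hu (mul_nonneg hu hy),
    sq_nonneg y]

theorem bound_one (u g y b : ℝ) (hu : 0 ≤ u) (hg : 0 ≤ g) (hR : u + g ≤ 2/25) (hy : 0 ≤ y) (hyR : y ≤ 1/25) (hb : 0 ≤ b) :
    -(1 / 8) * (6 + 2 * b + 2 * u - 4 * g) ^ 3 * (7 + 2 * b + u - 4 * g - y)
      - (3 / 4) * (1 - u) * (6 + 2 * b + 2 * u - 4 * g) ^ 2 * (7 + 2 * b + u - 4 * g - y)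
      + (3 / 4) * (6 + 2 * b + 2 * u - 4 * g) ^ 2 *
        (8 + 4 * b - (1 - u) ^ 2 - (4 * g) ^ 2 / 5 - y ^ 2)
      + (3 / 2) * (1 - u) * (6 + 2 * b + 2 * u - 4 * g) *
        (8 + 4 * b - (1 - u) ^ 2 - (4 * g) ^ 2 / 5 - y ^ 2)
      + (1 / 8) * (7 + 2 * b + u - 4 * g - y) * (4 + 2 * b - 4 * g) ^ 3
      + (1 / 8) * (7 + 2 * b + u - 4 * g - y) * (4 - 4 * g) ^ 3
      + (1 / 8) * (7 + 2 * b + u - 4 * g - y) * (9 * (2/25) ^ 3) < 0 := by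
  have h0 := coef_one_0 u g y hu hg hR hy hyR
  have h1 := mul_nonneg (neg_nonneg.mpr (coef_one_1 u g y hu hg hR hy hyR).le) hb
  have h2 := mul_nonneg (neg_nonneg.mpr (coef_one_2 u g y hu hg hR hy hyR).le)
    (mul_nonneg hb hb)
  linarith

theorem coef_two_0 (u g : ℝ) (hu : 0 ≤ u) (hg : 0 ≤ g) (hR : u + g ≤ 1/10) :
    (-111937/8000) + (303991/2000) * g + (-996/5) * g ^ 2 + (392/5) * g ^ 3 + (-32/5) * g ^ 4 +
      (-63991/8000) * u + 72 * u * g + (-312/5) * u * g ^ 2 + (56/5) * u * g ^ 3 + 12 * u ^ 2 +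
      (-24) * u ^ 2 * g + 12 * u ^ 2 * g ^ 2 + 8 * u ^ 3 + (-8) * u ^ 3 * g + 2 * u ^ 4 < 0 := by
  have hw : 0 ≤ 1/10 - u - g := by linarith
  nlinarith [sq_nonneg (g - 1/10),
    mul_nonneg hu hg,
    mul_nonneg hu hw,
    mul_nonneg hg hw,
    mul_nonneg (mul_nonneg hu hg) hg,
    mul_nonneg (mul_nonneg hg hg) hw,
    mul_nonneg (mul_nonneg hu hu) hw,
    mul_nonneg (mul_nonneg hu hg) hw,
    mul_nonneg (mul_nonneg hu hu) hg,
    mul_nonneg (mul_nonneg (mul_nonneg hu hu) hu) hw,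
    mul_nonneg (mul_nonneg (mul_nonneg hu hu) hg) hw,
    mul_nonneg (mul_nonneg (mul_nonneg hu hg) hg) hw,
    pow_nonneg hg 4,
    mul_nonneg (pow_nonneg hu 3) hg,
    mul_nonneg (pow_nonneg hg 3) hu,
    mul_nonneg (pow_nonneg hg 2) (pow_nonneg hu 2)]

theorem coef_two_1 (u g : ℝ) (hu : 0 ≤ u) (hg : 0 ≤ g) (hR : u + g ≤ 1/10) :
    (-63991/4000) + 132 * g + (-576/5) * g ^ 2 + (112/5) * g ^ 3 + 24 * u * g +
      (-48/5) * u * g ^ 2 + 12 * u ^ 2 + (-12) * u ^ 2 * g + 4 * u ^ 3 < 0 := by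
  have hw : 0 ≤ 1/10 - u - g := by linarith
  nlinarith [sq_nonneg (g - 1/10),
    mul_nonneg hu hg,
    mul_nonneg hu hw,
    mul_nonneg hg hw,
    mul_nonneg (mul_nonneg hu hg) hg,
    mul_nonneg (mul_nonneg hg hg) hw,
    mul_nonneg (mul_nonneg hu hu) hw,
    mul_nonneg (mul_nonneg hu hg) hw,
    mul_nonneg (mul_nonneg hu hu) hg]

theorem coef_two_2 (u g : ℝ) (hu : 0 ≤ u) (hg : 0 ≤ g) (hR : u + g ≤ 1/10) :
    (-3) + 24 * g + (-48/5) * g ^ 2 + 3 * u ^ 2 < 0 := by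
  have hw : 0 ≤ 1/10 - u - g := by linarith
  nlinarith [sq_nonneg (g - 1/10),
    mul_nonneg hu hg,
    mul_nonneg hu hw,
    mul_nonneg hg hw,
    mul_nonneg (mul_nonneg hu hg) hg,
    mul_nonneg (mul_nonneg hg hg) hw,
    mul_nonneg (mul_nonneg hu hu) hw,
    mul_nonneg (mul_nonneg hu hg) hw,
    mul_nonneg (mul_nonneg hu hu) hg]

theorem bound_two (u g b : ℝ) (hu : 0 ≤ u) (hg : 0 ≤ g) (hR : u + g ≤ 1/10) (hb : 0 ≤ b) :
    -(1 / 8) * (6 + 2 * b + 2 * u - 4 * g) ^ 3 * (7 + 2 * b + u - 4 * g - 0)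
      - (3 / 4) * (1 - u) * (6 + 2 * b + 2 * u - 4 * g) ^ 2 * (7 + 2 * b + u - 4 * g - 0)
      + (3 / 4) * (6 + 2 * b + 2 * u - 4 * g) ^ 2 *
        (8 + 4 * b - (1 - u) ^ 2 - (4 * g) ^ 2 / 5 - 0 ^ 2)
      + (3 / 2) * (1 - u) * (6 + 2 * b + 2 * u - 4 * g) *
        (8 + 4 * b - (1 - u) ^ 2 - (4 * g) ^ 2 / 5 - 0 ^ 2)
      + (1 / 8) * (7 + 2 * b + u - 4 * g - 0) * (4 + 2 * b - 4 * g) ^ 3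
      + (1 / 8) * (7 + 2 * b + u - 4 * g - 0) * (4 - 4 * g) ^ 3
      + (1 / 8) * (7 + 2 * b + u - 4 * g - 0) * (9 * (1/10) ^ 3) < 0 := by
  have h0 := coef_two_0 u g hu hg hR
  have h1 := mul_nonneg (neg_nonneg.mpr (coef_two_1 u g hu hg hR).le) hb
  have h2 := mul_nonneg (neg_nonneg.mpr (coef_two_2 u g hu hg hR).le)
    (mul_nonneg hb hb)
  linarith

/-- Bound for the sum of the four cubes, in terms of `x i = 1 - a i`. -/
theorem cubes_bound (R x2 x3 x4 x5 x6 : ℝ) (h6 : 0 ≤ x6) (h5 : x6 ≤ x5) (h4 : x5 ≤ x4)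
    (h3 : x4 ≤ x3) (h2 : x3 ≤ x2) (hR : x2 ≤ R) (hc : x2 + x5 + x6 ≤ x3 + x4) :
    (x2 + x3 - x4 - x5 - x6) ^ 3 + (x2 + x4 - x3 - x5 - x6) ^ 3 + (x2 + x5 - x3 - x4 - x6) ^ 3
      + (x3 + x4 - x2 - x5 - x6) ^ 3 ≤ 9 * R ^ 3 := by
  have mono : ∀ a b : ℝ, a ≤ b → a ^ 3 ≤ b ^ 3 := fun a b h =>
    (Odd.strictMono_pow (by decide : Odd 3)).monotone h
  have e1 := mono (x2 + x3 - x4 - x5 - x6) (2 * R) (by linarith)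
  have e2 := mono (x2 + x4 - x3 - x5 - x6) R (by linarith)
  have e3 := mono (x2 + x5 - x3 - x4 - x6) (-(x3 + x4 - x2 - x5 - x6)) (by linarith)
  nlinarith [e1, e2, e3]

/-- Reduction to three variables. -/
theorem reduction (R u x2 x3 x4 x5 x6 y b : ℝ) (hu : 0 ≤ u) (hu1 : u ≤ 1) (hy1 : y ≤ 1)
    (h6 : 0 ≤ x6) (h5 : x6 ≤ x5) (h4 : x5 ≤ x4)
    (h3 : x4 ≤ x3) (h2 : x3 ≤ x2) (hR : x2 ≤ R) (hR1 : R ≤ 1) (hc : x2 + x5 + x6 ≤ x3 + x4)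
    (hb : 0 ≤ b) (g : ℝ) (hg : 4 * g = x2 + x3 + x4 + x5 + x6)
    (hG : -(1 / 8) * (6 + 2 * b + 2 * u - 4 * g) ^ 3 * (7 + 2 * b + u - 4 * g - y)
      - (3 / 4) * (1 - u) * (6 + 2 * b + 2 * u - 4 * g) ^ 2 * (7 + 2 * b + u - 4 * g - y)
      + (3 / 4) * (6 + 2 * b + 2 * u - 4 * g) ^ 2 *
        (8 + 4 * b - (1 - u) ^ 2 - (4 * g) ^ 2 / 5 - y ^ 2)
      + (3 / 2) * (1 - u) * (6 + 2 * b + 2 * u - 4 * g) *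
        (8 + 4 * b - (1 - u) ^ 2 - (4 * g) ^ 2 / 5 - y ^ 2)
      + (1 / 8) * (7 + 2 * b + u - 4 * g - y) * (4 + 2 * b - 4 * g) ^ 3
      + (1 / 8) * (7 + 2 * b + u - 4 * g - y) * (4 - 4 * g) ^ 3
      + (1 / 8) * (7 + 2 * b + u - 4 * g - y) * (9 * R ^ 3) < 0)
    (a1 a2 a3 a4 a5 a6 a7 : ℝ) (e1 : a1 = u) (e2 : a2 = 1 - x2) (e3 : a3 = 1 - x3)
    (e4 : a4 = 1 - x4) (e5 : a5 = 1 - x5) (e6 : a6 = 1 - x6) (e7 : a7 = 1 - y) :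
      Fpoly a1 a2 a3 a4 a5 a6 a7 b +
        (1 / 8) * (1 + 2 * b + a1 + a2 + a3 + a4 + a5 + a6 + a7) *
          ((a4 + a5 + a6 - 1 - a2 - a3) ^ 3 +
            (a3 + a5 + a6 - 1 - a2 - a4) ^ 3 +
            (a3 + a4 + a6 - 1 - a2 - a5) ^ 3 +
            (a2 + a5 + a6 - 1 - a3 - a4) ^ 3) < 0 := by
  have hcub := cubes_bound R x2 x3 x4 x5 x6 h6 h5 h4 h3 h2 hR hc
  have hPe : 1 + 2 * b + a1 + a2 + a3 + a4 + a5 + a6 + a7 = 7 + 2 * b + u - 4 * g - y := by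
    linarith
  have hTe : 1 + 2 * b + 2 * a1 + a2 + a3 + a4 + a5 + a6 = 6 + 2 * b + 2 * u - 4 * g := by
    linarith
  have hSe : a2 + a3 + a4 + a5 + a6 = 5 - 4 * g := by linarith
  have hQ : 1 + 4 * b + 2 * (a1 + a2 + a3 + a4 + a5 + a6 + a7) -
      (a1 ^ 2 + a2 ^ 2 + a3 ^ 2 + a4 ^ 2 + a5 ^ 2 + a6 ^ 2 + a7 ^ 2) ≤
      8 + 4 * b - (1 - u) ^ 2 - (4 * g) ^ 2 / 5 - y ^ 2 := by
    rw [hg]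
    subst e1 e2 e3 e4 e5 e6 e7
    linarith [sq_nonneg (x2 - x3), sq_nonneg (x2 - x4), sq_nonneg (x2 - x5), sq_nonneg (x2 - x6),
      sq_nonneg (x3 - x4), sq_nonneg (x3 - x5), sq_nonneg (x3 - x6), sq_nonneg (x4 - x5),
      sq_nonneg (x4 - x6), sq_nonneg (x5 - x6)]
  have hcub' : (a4 + a5 + a6 - 1 - a2 - a3) ^ 3 + (a3 + a5 + a6 - 1 - a2 - a4) ^ 3 +
      (a3 + a4 + a6 - 1 - a2 - a5) ^ 3 + (a2 + a5 + a6 - 1 - a3 - a4) ^ 3 ≤ 9 * R ^ 3 := by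
    refine le_trans (le_of_eq ?_) hcub
    subst e1 e2 e3 e4 e5 e6 e7
    ring
  unfold Fpoly
  simp only [hPe, hTe, hSe]
  have hP : 0 ≤ 7 + 2 * b + u - 4 * g - y := by linarith
  have hT : 0 ≤ 6 + 2 * b + 2 * u - 4 * g := by linarith
  have hu' : 0 ≤ 1 - u := by linarith
  have k1 := mul_le_mul_of_nonneg_left hcub' (mul_nonneg (by norm_num : (0:ℝ) ≤ 1 / 8) hP)
  have k2 := mul_le_mul_of_nonneg_left hQ
    (mul_nonneg (by norm_num : (0:ℝ) ≤ 3 / 4) (pow_nonneg hT 2))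
  have k3 := mul_le_mul_of_nonneg_left hQ
    (mul_nonneg (mul_nonneg (by norm_num : (0:ℝ) ≤ 3 / 2) hu') hT)
  have r1 : -1 + 2 * b + (5 - 4 * g) = 4 + 2 * b - 4 * g := by ring
  have r2 : -1 + (5 - 4 * g) = 4 - 4 * g := by ring
  rw [r1, r2]
  subst e1
  linarith

theorem Fpoly_corr4_negative :
    (∀ a1 a2 a3 a4 a5 a6 a7 b : ℝ,
      0 ≤ a1 → a1 ≤ a2 → a2 ≤ a3 → a3 ≤ a4 → a4 ≤ a5 → a5 ≤ a6 → a6 ≤ a7 → a7 < 1 →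
      0 ≤ b → a2 + a5 + a6 ≥ 1 + a3 + a4 → a2 - a1 ≥ 23 / 25 →
      Fpoly a1 a2 a3 a4 a5 a6 a7 b +
        (1 / 8) * (1 + 2 * b + a1 + a2 + a3 + a4 + a5 + a6 + a7) *
          ((a4 + a5 + a6 - 1 - a2 - a3) ^ 3 +
            (a3 + a5 + a6 - 1 - a2 - a4) ^ 3 +
            (a3 + a4 + a6 - 1 - a2 - a5) ^ 3 +
            (a2 + a5 + a6 - 1 - a3 - a4) ^ 3) < 0) ∧
    (∀ a1 a2 a3 a4 a5 a6 b : ℝ,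
      0 ≤ a1 → a1 ≤ a2 → a2 ≤ a3 → a3 ≤ a4 → a4 ≤ a5 → a5 ≤ a6 → a6 < 1 →
      0 ≤ b → a2 + a5 + a6 ≥ 1 + a3 + a4 → a2 - a1 ≥ 9 / 10 →
      Fpoly a1 a2 a3 a4 a5 a6 1 b +
        (1 / 8) * (1 + 2 * b + a1 + a2 + a3 + a4 + a5 + a6 + 1) *
          ((a4 + a5 + a6 - 1 - a2 - a3) ^ 3 +
            (a3 + a5 + a6 - 1 - a2 - a4) ^ 3 +
            (a3 + a4 + a6 - 1 - a2 - a5) ^ 3 +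
            (a2 + a5 + a6 - 1 - a3 - a4) ^ 3) < 0) := by
  constructor
  · intro a1 a2 a3 a4 a5 a6 a7 b h1 h2 h3 h4 h5 h6 h7 h8 hb hc hd
    have hG := bound_one a1 (((1 - a2) + (1 - a3) + (1 - a4) + (1 - a5) + (1 - a6)) / 4) (1 - a7) b
      h1 (by linarith) (by linarith) (by linarith) (by linarith) hb
    exact reduction (2 / 25) a1 (1 - a2) (1 - a3) (1 - a4) (1 - a5) (1 - a6) (1 - a7) b h1
      (by linarith) (by linarith) (by linarith) (by linarith) (by linarith) (by linarith)
      (by linarith) (by linarith) (by norm_num) (by linarith) hb _ (by ring) hG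
      a1 a2 a3 a4 a5 a6 a7 rfl (by ring) (by ring) (by ring) (by ring) (by ring) (by ring)
  · intro a1 a2 a3 a4 a5 a6 b h1 h2 h3 h4 h5 h6 h8 hb hc hd
    have hG := bound_two a1 (((1 - a2) + (1 - a3) + (1 - a4) + (1 - a5) + (1 - a6)) / 4) b
      h1 (by linarith) (by linarith) hb
    exact reduction (1 / 10) a1 (1 - a2) (1 - a3) (1 - a4) (1 - a5) (1 - a6) 0 b h1
      (by linarith) (by linarith) (by linarith) (by linarith) (by linarith) (by linarith)
      (by linarith) (by linarith) (by norm_num) (by linarith) hb _ (by ring) hG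
      a1 a2 a3 a4 a5 a6 1 rfl (by ring) (by ring) (by ring) (by ring) (by ring) (by ring)
end
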